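/- For all integers p ≥ 2 with p ≠ 4 and all m ≥ 2, the distinguishing number of the circulant graph C(m,p) equals m + 1. -/

import Mathlib

/-!
Let `π : ℤ_{mp} → ℤ_p` be the reduction map. Two vertices `u, v` of `C(m,p)` are adjacent iff
`π v - π u = ±1` (`circC_adj_iff`), so the graph is the cycle on `ℤ_p` with every vertex
replaced by an independent set of `m` twins, the fibres of `π`.

*Lower bound.* In a distinguishing labeling `c` twins have different labels, since swapping them
is an automorphism. Hence `v ↦ (π v, c v)` is injective into `ℤ_p × Fin r`. If `r ≤ m`, counting
makes it a bijection, and the shift `(i, a) ↦ (i + 1, a)` is then a nontrivial label-preserving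
automorphism.

*Upper bound.* With `m + 1` labels, let the fibre over `i` carry every label exactly once except
a missing label `f i`, where `f 0 = 0`, `f 1 = 1` and `f i = 2` otherwise. As `p ≠ 4`, being in
the same fibre is the same as having the same neighbours (`proj_eq_iff_twin`), so an automorphism
`σ` permutes the fibres. If it preserves labels it preserves missing labels, so it fixes the
fibres over `0` and `1`; following the cycle, it fixes all fibres, and hence all vertices.
-/

/-- A permutation of the vertices is a graph automorphism if it preserves adjacency. -/
def IsGraphAut {V : Type*} (G : SimpleGraph V) (σ : Equiv.Perm V) : Prop :=
  ∀ u v : V, G.Adj (σ u) (σ v) ↔ G.Adj u v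

/-- A labeling with `r` labels is distinguishing if no nontrivial automorphism preserves it. -/
def IsDistinguishing {V : Type*} (G : SimpleGraph V) {r : ℕ} (c : V → Fin r) : Prop :=
  ∀ σ : Equiv.Perm V, IsGraphAut G σ → (∀ v, c (σ v) = c v) → σ = Equiv.refl V

/-- The distinguishing number of a graph: the least `r` admitting an `r`-distinguishing
labeling. -/
noncomputable def distinguishingNumber {V : Type*} (G : SimpleGraph V) : ℕ :=
  sInf {r : ℕ | ∃ c : V → Fin r, IsDistinguishing G c}

/-- The jump set `A = {p-1+r·p, p+1+r·p : 0 ≤ r ≤ m-1}` inside `ℤ_{mp}`. -/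
def jumpSet (m p : ℕ) : Set (ZMod (m * p)) :=
  {a | ∃ r < m, a = ((p - 1 + r * p : ℕ) : ZMod (m * p)) ∨
                a = ((p + 1 + r * p : ℕ) : ZMod (m * p))}

/-- The circulant graph `C(m,p)` on vertex set `ℤ_{mp}`: `i` and `j` are adjacent iff
`j - i (mod mp)` lies in the jump set. -/
def circC (m p : ℕ) : SimpleGraph (ZMod (m * p)) :=
  SimpleGraph.circulantGraph (jumpSet m p)

/-- The set `M_i = {i + r·p : 0 ≤ r ≤ m-1}` in `ℤ_{mp}`. -/
def Mset (m p i : ℕ) : Set (ZMod (m * p)) :=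
  {v | ∃ r < m, v = ((i + r * p : ℕ) : ZMod (m * p))}

/-- Reduction `ℤ_{mp} → ℤ_p`; its fibres are the sets `M_i`. -/
abbrev proj (m p : ℕ) : ZMod (m * p) →+* ZMod p :=
  ZMod.castHom (Dvd.intro_left m rfl) (ZMod p)

lemma proj_eq_val (m p : ℕ) (hm : 2 ≤ m) (hp : 2 ≤ p) (a : ZMod (m * p)) :
    proj m p a = ((a.val : ℕ) : ZMod p) := by
  have : NeZero (m * p) := ⟨by positivity⟩
  conv_lhs => rw [← ZMod.natCast_zmod_val a]
  rw [map_natCast]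

lemma mem_jumpSet_iff (m p : ℕ) (hm : 2 ≤ m) (hp : 2 ≤ p) (a : ZMod (m * p)) :
    a ∈ jumpSet m p ↔ proj m p a = 1 ∨ proj m p a = -1 := by
  have : NeZero (m * p) := ⟨by positivity⟩
  constructor
  · rintro ⟨r, -, rfl | rfl⟩
    · right
      rw [map_natCast]
      push_cast [Nat.cast_sub (show 1 ≤ p by omega)]
      simp
    · left
      rw [map_natCast]
      simp
  · intro h
    rw [proj_eq_val m p hm hp] at h
    have hlt := ZMod.val_lt a
    have hdm := Nat.div_add_mod a.val p
    have hq : a.val / p < m := Nat.div_lt_of_lt_mul (hlt.trans_eq (mul_comm m p))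
    rcases h with h | h
    · have h1 : a.val % p = 1 := by
        have : ((a.val : ℕ) : ZMod p) = ((1 : ℕ) : ZMod p) := by simpa using h
        rw [ZMod.natCast_eq_natCast_iff'] at this
        rw [this]; exact Nat.mod_eq_of_lt hp
      -- The residue `1` itself is written as `p + 1 + (m - 1) p = m p + 1`.
      rcases Nat.eq_zero_or_pos (a.val / p) with h0 | h0
      · refine ⟨m - 1, by omega, Or.inr ?_⟩
        have ha : a.val = 1 := by rw [h0, h1] at hdm; simpa using hdm.symm
        have e : p + 1 + (m - 1) * p = m * p + 1 := by
          obtain ⟨k, rfl⟩ : ∃ k, m = k + 1 := ⟨m - 1, by omega⟩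
          simp; ring
        rw [e, ← ZMod.natCast_zmod_val a, ha]
        push_cast
        rw [← Nat.cast_mul, ZMod.natCast_self]; simp
      · refine ⟨a.val / p - 1, by omega, Or.inr ?_⟩
        obtain ⟨k, hk⟩ : ∃ k, a.val / p = k + 1 := ⟨a.val / p - 1, by omega⟩
        have e : p + 1 + (a.val / p - 1) * p = a.val := by
          rw [h1, hk] at hdm
          rw [hk, Nat.add_sub_cancel, ← hdm]; ring
        rw [e, ZMod.natCast_zmod_val]
    · refine ⟨a.val / p, hq, Or.inl ?_⟩
      have h1 : a.val % p = p - 1 := by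
        have : ((a.val : ℕ) : ZMod p) = ((p - 1 : ℕ) : ZMod p) := by
          rw [h, Nat.cast_sub (by omega)]; simp
        rw [ZMod.natCast_eq_natCast_iff'] at this
        rw [this]; exact Nat.mod_eq_of_lt (by omega)
      have e : p - 1 + a.val / p * p = a.val := by
        rw [mul_comm]; omega
      rw [e, ZMod.natCast_zmod_val]

lemma circC_adj_iff (m p : ℕ) (hm : 2 ≤ m) (hp : 2 ≤ p) (u v : ZMod (m * p)) :
    (circC m p).Adj u v ↔
      proj m p v = proj m p u + 1 ∨ proj m p u = proj m p v + 1 := by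
  have : Fact (1 < p) := ⟨hp⟩
  have hne : proj m p v = proj m p u + 1 ∨ proj m p u = proj m p v + 1 → u ≠ v := by
    rintro h rfl
    simp at h
  rw [circC, SimpleGraph.circulantGraph, SimpleGraph.fromRel_adj, mem_jumpSet_iff m p hm hp,
    mem_jumpSet_iff m p hm hp, map_sub, map_sub]
  constructor
  · rintro ⟨-, (h | h) | (h | h)⟩
    · right; linear_combination h
    · left; linear_combination -h
    · left; linear_combination h
    · right; linear_combination -h
  · intro h
    refine ⟨hne h, ?_⟩
    rcases h with h | h
    · right; left; linear_combination h
    · left; left; linear_combination h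

lemma exists_proj_eq (m p : ℕ) (i : ZMod p) : ∃ v, proj m p v = i :=
  ZMod.castHom_surjective (Dvd.intro_left m rfl) i

/-- For `p ≠ 4` the fibres of `proj` are exactly the twin classes. In `ℤ_4` this fails, because
`i - 1, i + 1` are also the neighbours of `i + 2`. -/
lemma proj_eq_iff_twin (m p : ℕ) (hm : 2 ≤ m) (hp : 2 ≤ p) (hp4 : p ≠ 4)
    (u v : ZMod (m * p)) :
    proj m p u = proj m p v ↔ ∀ w, (circC m p).Adj u w ↔ (circC m p).Adj v w := by
  simp only [circC_adj_iff m p hm hp]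
  constructor
  · intro h w; rw [h]
  · intro h
    obtain ⟨w, hw⟩ := exists_proj_eq m p (proj m p u + 1)
    obtain ⟨w', hw'⟩ := exists_proj_eq m p (proj m p u - 1)
    have h1 := (h w).1 (Or.inl hw)
    have h2 := (h w').1 (Or.inr (by rw [hw']; ring))
    rw [hw] at h1
    rw [hw'] at h2
    rcases h1 with h1 | h1
    · linear_combination h1
    rcases h2 with h2 | h2
    · -- Here `v = u + 2 = u - 2`, so `p ∣ 4`, which leaves only `p = 2`.
      have h4 : ((4 : ℕ) : ZMod p) = 0 := by push_cast; linear_combination - h1 - h2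
      rw [ZMod.natCast_eq_zero_iff] at h4
      have : p ≤ 4 := Nat.le_of_dvd (by norm_num) h4
      have hp2 : p = 2 := by
        interval_cases p <;> omega
      have h2' : (2 : ZMod p) = 0 := by
        have := ZMod.natCast_self p
        rw [show ((p : ℕ) : ZMod p) = ((2 : ℕ) : ZMod p) by rw [← hp2]] at this
        exact_mod_cast this
      linear_combination -h1 - h2'
    · linear_combination -h2

lemma proj_aut_iff (m p : ℕ) (hm : 2 ≤ m) (hp : 2 ≤ p) (hp4 : p ≠ 4)
    (σ : Equiv.Perm (ZMod (m * p))) (hσ : IsGraphAut (circC m p) σ) (u v : ZMod (m * p)) :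
    proj m p (σ u) = proj m p (σ v) ↔ proj m p u = proj m p v := by
  rw [proj_eq_iff_twin m p hm hp hp4, proj_eq_iff_twin m p hm hp hp4, ← σ.forall_congr_right]
  simp only [hσ _ _]

/-- A distinguishing labeling needs more than `m` labels. -/
lemma lower_bound (m p r : ℕ) (hm : 2 ≤ m) (hp : 2 ≤ p)
    (c : ZMod (m * p) → Fin r) (hc : IsDistinguishing (circC m p) c) : m + 1 ≤ r := by
  have : NeZero (m * p) := ⟨by positivity⟩
  have : NeZero p := ⟨by omega⟩
  have : Fact (1 < p) := ⟨hp⟩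
  by_contra! hlt
  have hinj : Function.Injective (fun v => (proj m p v, c v)) := by
    intro u v huv
    obtain ⟨h1, h2⟩ := Prod.mk.inj huv
    have hproj : ∀ w, proj m p (Equiv.swap u v w) = proj m p w := by
      intro w
      rw [Equiv.swap_apply_def]
      split_ifs with hu hv
      · rw [hu, h1]
      · rw [hv, h1]
      · rfl
    have := hc (Equiv.swap u v)
      (fun a b => by simp only [circC_adj_iff m p hm hp, hproj])
      (fun w => by
        rw [Equiv.swap_apply_def]
        split_ifs with hu hv
        · rw [hu, h2]
        · rw [hv, h2]
        · rfl)
    exact Equiv.swap_eq_refl_iff.1 this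
  have hcard := Fintype.card_le_of_injective _ hinj
  have hbij : Function.Bijective (fun v => (proj m p v, c v)) := by
    refine (Fintype.bijective_iff_injective_and_card _).2 ⟨hinj, le_antisymm hcard ?_⟩
    simp only [Fintype.card_prod, ZMod.card, Fintype.card_fin]
    rw [mul_comm]
    exact Nat.mul_le_mul_right _ (by omega)
  let e := Equiv.ofBijective _ hbij
  let s : Equiv.Perm (ZMod p × Fin r) := (Equiv.addRight (1 : ZMod p)).prodCongr (Equiv.refl _)
  let σ : Equiv.Perm (ZMod (m * p)) := (e.trans s).trans e.symm
  have he : ∀ v, e (σ v) = (proj m p v + 1, c v) := fun v => by simp [σ, s, e]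
  have h1 : ∀ v, proj m p (σ v) = proj m p v + 1 := fun v => congrArg Prod.fst (he v)
  have h2 : ∀ v, c (σ v) = c v := fun v => congrArg Prod.snd (he v)
  have := hc σ (fun u v => by simp only [circC_adj_iff m p hm hp, h1, add_left_inj]) h2
  have h0 := h1 0
  rw [this] at h0
  simp at h0

/-- The label missing from the fibre over `i`: `0` for `i = 0`, `1` for `i = 1`, and `2`
otherwise. -/
def missing (m p : ℕ) (hm : 2 ≤ m) (i : ZMod p) : Fin (m + 1) :=
  if i = 0 then ⟨0, by omega⟩ else if i = 1 then ⟨1, by omega⟩ else ⟨2, by omega⟩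

/-- Any choice `f` of missing labels is realised: `v` gets the number `v.val / p` of its place
in its fibre, moved past the label `f (proj v)`. -/
lemma exists_labeling (m p : ℕ) (hm : 2 ≤ m) (hp : 2 ≤ p) (f : ZMod p → Fin (m + 1)) :
    ∃ c : ZMod (m * p) → Fin (m + 1),
      (∀ u v, proj m p u = proj m p v → c u = c v → u = v) ∧
      (∀ v, c v ≠ f (proj m p v)) ∧
      (∀ i a, a ≠ f i → ∃ v, proj m p v = i ∧ c v = a) := by
  have : NeZero (m * p) := ⟨by positivity⟩
  have : NeZero p := ⟨by omega⟩
  have hq : ∀ v : ZMod (m * p), v.val / p < m := fun v =>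
    Nat.div_lt_of_lt_mul ((ZMod.val_lt v).trans_eq (mul_comm m p))
  refine ⟨fun v => (f (proj m p v)).succAbove ⟨v.val / p, hq v⟩, ?_, ?_, ?_⟩
  · intro u v h hc
    dsimp only at hc
    rw [h] at hc
    have hd := congrArg Fin.val (Fin.succAbove_right_injective hc)
    dsimp only at hd
    rw [proj_eq_val m p hm hp, proj_eq_val m p hm hp, ZMod.natCast_eq_natCast_iff'] at h
    apply ZMod.val_injective
    rw [← Nat.div_add_mod u.val p, ← Nat.div_add_mod v.val p, hd, h]
  · intro v
    exact Fin.succAbove_ne _ _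
  · intro i a ha
    obtain ⟨k, hk⟩ := Fin.exists_succAbove_eq ha
    have hi := ZMod.val_lt i
    have hlt : i.val + p * k.val < m * p := by
      have : p * (k.val + 1) ≤ p * m := Nat.mul_le_mul_left _ k.isLt
      rw [mul_comm m p]; linarith
    have hv : ((i.val + p * k.val : ℕ) : ZMod (m * p)).val = i.val + p * k.val :=
      ZMod.val_natCast_of_lt hlt
    have hpr : proj m p ((i.val + p * k.val : ℕ) : ZMod (m * p)) = i := by
      rw [map_natCast]; simp
    refine ⟨((i.val + p * k.val : ℕ) : ZMod (m * p)), hpr, ?_⟩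
    dsimp only
    rw [hpr, ← hk]
    congr 1
    apply Fin.ext
    dsimp only
    rw [hv, Nat.add_mul_div_left _ _ (by omega), Nat.div_eq_of_lt hi, zero_add]

lemma upper_bound (m p : ℕ) (hm : 2 ≤ m) (hp : 2 ≤ p) (hp4 : p ≠ 4) :
    ∃ c : ZMod (m * p) → Fin (m + 1), IsDistinguishing (circC m p) c := by
  have : NeZero p := ⟨by omega⟩
  have : Fact (1 < p) := ⟨hp⟩
  obtain ⟨c, hinj, hmiss, hex⟩ := exists_labeling m p hm hp (missing m p hm)
  refine ⟨c, fun σ hσ hc => ?_⟩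
  have hpr := proj_aut_iff m p hm hp hp4 σ hσ
  have hf : ∀ v, missing m p hm (proj m p (σ v)) = missing m p hm (proj m p v) := by
    intro v
    by_contra hne
    obtain ⟨u, hu, hcu⟩ := hex _ _ hne
    apply hmiss (σ u)
    rw [hc, hcu, (hpr u v).2 hu]
  have key : ∀ n : ℕ, ∀ v, proj m p v = n → proj m p (σ v) = n := by
    intro n
    induction n using Nat.twoStepInduction with
    | zero =>
      intro v hv
      have := hf v
      simp only [missing, hv] at this
      grind
    | one =>
      intro v hv
      have := hf v
      simp only [missing, hv] at this
      grind
    | more n h0 h1 =>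
      intro v hv
      obtain ⟨w, hw⟩ := exists_proj_eq m p ((n + 1 : ℕ) : ZMod p)
      obtain ⟨w', hw'⟩ := exists_proj_eq m p (n : ZMod p)
      have hadj : (circC m p).Adj w v := by
        rw [circC_adj_iff m p hm hp, hw, hv]
        left; push_cast; ring
      rw [← hσ, circC_adj_iff m p hm hp, h1 w hw] at hadj
      rcases hadj with h | h
      · rw [h]; push_cast; ring
      · have hn : proj m p (σ v) = n := by push_cast at h; linear_combination -h
        -- The fibres over `n` and `n + 2` have the same image, so they coincide.
        have := (hpr w' v).1 (by rw [h0 w' hw', hn])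
        rw [hn, ← hw', this, hv]
  ext1 v
  refine hinj _ _ ?_ (hc v)
  have := key (proj m p v).val v (by simp)
  simpa using this

theorem stmt_5 (m p : ℕ) (hm : 2 ≤ m) (hp : 2 ≤ p) (hp4 : p ≠ 4) :
    distinguishingNumber (circC m p) = m + 1 := by
  refine IsLeast.csInf_eq ⟨upper_bound m p hm hp hp4, ?_⟩
  rintro r ⟨c, hc⟩
  exact lower_bound m p r hm hp c hc
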